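/- arXiv:2408.08476 — 4 statements merged into one kernel-verified Lean document; each statement's English description precedes it below -/
import Mathlib

section
/- Let Σ ∈ ℝ^{n×n} and R ∈ ℝ^{m×m} be symmetric positive definite, H ∈ ℝ^{m×n}, and fix y ∈ ℝᵐ. Set S := HΣHᵀ + R, K := ΣHᵀS⁻¹, C := (I − KH)Σ. Let X : Ω → ℝⁿ and η : Ω → ℝᵐ be independent random vectors on a probability space (Ω, 𝓕, P) such that the law of X has Lebesgue density x ↦ φ_Σ(x − m₀) and the law of η has Lebesgue density φ_R. Then the random vector Xᵃ := X + K(y − HX − η) has law with Lebesgue density x ↦ φ_C(x − μ), where μ := m₀ + K(y − Hm₀). -/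
open Matrix Real MeasureTheory ProbabilityTheory

/-- Centered Gaussian density on `ℝᵏ` with covariance matrix `Q`:
`φ_Q(u) = (2π)^(-k/2) (det Q)^(-1/2) exp(-(1/2) uᵀ Q⁻¹ u)`. -/
noncomputable def gaussianDensity {k : ℕ} (Q : Matrix (Fin k) (Fin k) ℝ)
    (u : Fin k → ℝ) : ℝ :=
  (2 * π) ^ (-(k : ℝ) / 2) * Q.det ^ (-(1 : ℝ) / 2) *
    Real.exp (-(1 / 2) * (u ⬝ᵥ Q⁻¹ *ᵥ u))

lemma gd_quad {n m : ℕ}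
    (Sig : Matrix (Fin n) (Fin n) ℝ) (R : Matrix (Fin m) (Fin m) ℝ)
    (H : Matrix (Fin m) (Fin n) ℝ)
    (hSig : Sig.PosDef) (hR : R.PosDef)
    (S : Matrix (Fin m) (Fin m) ℝ) (hS : S = H * Sig * Hᵀ + R)
    (K : Matrix (Fin n) (Fin m) ℝ) (hK : K = Sig * Hᵀ * S⁻¹)
    (C : Matrix (Fin n) (Fin n) ℝ) (hC : C = (1 - K * H) * Sig) (hSp : S.PosDef)
    (a : Fin n → ℝ) (w : Fin m → ℝ) :
    gaussianDensity Sig (a + K *ᵥ w) * gaussianDensity R (w - H *ᵥ (a + K *ᵥ w)) =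
      gaussianDensity C a * gaussianDensity S w := by
  have uS : IsUnit S.det := hSp.det_pos.ne'.isUnit
  have uSig : IsUnit Sig.det := hSig.det_pos.ne'.isUnit
  have uR : IsUnit R.det := hR.det_pos.ne'.isUnit
  have hKS : K * S = Sig * Hᵀ := by
    rw [hK, Matrix.mul_assoc, Matrix.nonsing_inv_mul _ uS, Matrix.mul_one]
  have hSR : H * Sig * Hᵀ = S - R := by rw [hS]; abel
  have hHKS : (1 - H * K) * S = R := by
    rw [Matrix.sub_mul, Matrix.mul_assoc, hKS, ← Matrix.mul_assoc, hSR]; simp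
  have hdet : C.det * S.det = Sig.det * R.det := by
    rw [hC, Matrix.det_mul, Matrix.det_one_sub_mul_comm, ← hHKS, Matrix.det_mul]; ring
  have hCpos : 0 < C.det := by
    have := mul_pos hSig.det_pos hR.det_pos
    rw [← hdet] at this
    exact (pos_iff_pos_of_mul_pos this).2 hSp.det_pos
  have hKH : K * (H * Sig * Hᵀ) = Sig * Hᵀ - K * R := by
    rw [hSR, Matrix.mul_sub, hKS]
  have hCinv : C⁻¹ = Sig⁻¹ + Hᵀ * R⁻¹ * H := by
    apply Matrix.inv_eq_right_inv
    rw [hC]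
    have e1 : Sig * (Sig⁻¹ + Hᵀ * R⁻¹ * H) = 1 + Sig * Hᵀ * R⁻¹ * H := by
      rw [Matrix.mul_add, Matrix.mul_nonsing_inv _ uSig]; simp only [Matrix.mul_assoc]
    have e2 : K * H * (Sig * Hᵀ * R⁻¹ * H) = Sig * Hᵀ * R⁻¹ * H - K * H := by
      calc K * H * (Sig * Hᵀ * R⁻¹ * H) = K * (H * Sig * Hᵀ) * R⁻¹ * H := by
            simp only [Matrix.mul_assoc]
        _ = Sig * Hᵀ * R⁻¹ * H - K * (R * R⁻¹) * H := by
            rw [hKH]; simp only [Matrix.sub_mul, Matrix.mul_assoc]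
        _ = _ := by rw [Matrix.mul_nonsing_inv _ uR, Matrix.mul_one]
    rw [Matrix.mul_assoc, e1, Matrix.sub_mul, Matrix.mul_add (K * H), e2]
    simp
  have hSK : Sig⁻¹ * K = Hᵀ * S⁻¹ := by
    rw [hK, Matrix.mul_assoc, ← Matrix.mul_assoc, Matrix.nonsing_inv_mul _ uSig, Matrix.one_mul]
  have hRS : R⁻¹ * (1 - H * K) = S⁻¹ := by
    symm
    apply Matrix.inv_eq_left_inv
    rw [Matrix.mul_assoc, hHKS, Matrix.nonsing_inv_mul _ uR]
  have symS : (Sig⁻¹)ᵀ = Sig⁻¹ := by simpa using hSig.inv.isHermitian.eq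
  have symR : (R⁻¹)ᵀ = R⁻¹ := by simpa using hR.inv.isHermitian.eq
  have hquad : (a + K *ᵥ w) ⬝ᵥ Sig⁻¹ *ᵥ (a + K *ᵥ w)
      + (w - H *ᵥ (a + K *ᵥ w)) ⬝ᵥ R⁻¹ *ᵥ (w - H *ᵥ (a + K *ᵥ w))
      = a ⬝ᵥ C⁻¹ *ᵥ a + w ⬝ᵥ S⁻¹ *ᵥ w := by
    obtain ⟨x, hx⟩ : ∃ x, x = a + K *ᵥ w := ⟨_, rfl⟩
    obtain ⟨e, he⟩ : ∃ e, e = w - H *ᵥ x := ⟨_, rfl⟩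
    have h1 : Sig⁻¹ *ᵥ x = Sig⁻¹ *ᵥ a + Hᵀ *ᵥ (S⁻¹ *ᵥ w) := by
      rw [hx, Matrix.mulVec_add, Matrix.mulVec_mulVec, hSK, Matrix.mulVec_mulVec]
    have h2 : R⁻¹ *ᵥ e = S⁻¹ *ᵥ w - R⁻¹ *ᵥ (H *ᵥ a) := by
      rw [he, hx, ← hRS]
      simp only [Matrix.mulVec_add, Matrix.mulVec_sub, ← Matrix.mulVec_mulVec, Matrix.sub_mulVec,
        Matrix.one_mulVec]
      abel
    have tr (p : Fin n → ℝ) (q : Fin m → ℝ) : p ⬝ᵥ Hᵀ *ᵥ q = (H *ᵥ p) ⬝ᵥ q := by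
      rw [Matrix.dotProduct_mulVec, Matrix.vecMul_transpose]
    have s1 : x ⬝ᵥ Sig⁻¹ *ᵥ a = a ⬝ᵥ Sig⁻¹ *ᵥ x := by
      rw [Matrix.dotProduct_mulVec, ← Matrix.mulVec_transpose, symS, dotProduct_comm]
    have s2 : e ⬝ᵥ R⁻¹ *ᵥ (H *ᵥ a) = (H *ᵥ a) ⬝ᵥ R⁻¹ *ᵥ e := by
      rw [Matrix.dotProduct_mulVec, ← Matrix.mulVec_transpose, symR, dotProduct_comm]
    have hCa : a ⬝ᵥ C⁻¹ *ᵥ a = a ⬝ᵥ Sig⁻¹ *ᵥ a + (H *ᵥ a) ⬝ᵥ R⁻¹ *ᵥ (H *ᵥ a) := by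
      rw [hCinv, Matrix.add_mulVec, dotProduct_add, ← Matrix.mulVec_mulVec, ← Matrix.mulVec_mulVec,
        tr]
    rw [← hx, ← he, hCa]
    have t1 : x ⬝ᵥ Sig⁻¹ *ᵥ x = x ⬝ᵥ Sig⁻¹ *ᵥ a + (H *ᵥ x) ⬝ᵥ S⁻¹ *ᵥ w := by
      rw [h1, dotProduct_add, tr]
    have t2 : e ⬝ᵥ R⁻¹ *ᵥ e = w ⬝ᵥ S⁻¹ *ᵥ w - (H *ᵥ x) ⬝ᵥ S⁻¹ *ᵥ w
        - e ⬝ᵥ R⁻¹ *ᵥ (H *ᵥ a) := by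
      rw [h2, dotProduct_sub]
      congr 1
      rw [he, sub_dotProduct]
    have t3 : a ⬝ᵥ Sig⁻¹ *ᵥ x = a ⬝ᵥ Sig⁻¹ *ᵥ a + (H *ᵥ a) ⬝ᵥ S⁻¹ *ᵥ w := by
      rw [h1, dotProduct_add, tr]
    have t4 : (H *ᵥ a) ⬝ᵥ R⁻¹ *ᵥ e
        = (H *ᵥ a) ⬝ᵥ S⁻¹ *ᵥ w - (H *ᵥ a) ⬝ᵥ R⁻¹ *ᵥ (H *ᵥ a) := by
      rw [h2, dotProduct_sub]
    linarith
  have hd : Sig.det ^ (-(1 : ℝ) / 2) * R.det ^ (-(1 : ℝ) / 2)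
      = C.det ^ (-(1 : ℝ) / 2) * S.det ^ (-(1 : ℝ) / 2) := by
    rw [← Real.mul_rpow hSig.det_pos.le hR.det_pos.le, ← hdet,
      Real.mul_rpow hCpos.le hSp.det_pos.le]
  have hexp := congrArg (fun t => Real.exp (-(1 / 2) * t)) hquad
  simp only [mul_add (-(1 / 2) : ℝ), Real.exp_add] at hexp
  unfold gaussianDensity
  linear_combination (2 * π) ^ (-(n : ℝ) / 2) * (2 * π) ^ (-(m : ℝ) / 2) *
    (Sig.det ^ (-(1 : ℝ) / 2) * R.det ^ (-(1 : ℝ) / 2) * hexp +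
      Real.exp (-(1 / 2) * (a ⬝ᵥ C⁻¹ *ᵥ a)) * Real.exp (-(1 / 2) * (w ⬝ᵥ S⁻¹ *ᵥ w)) * hd)

lemma gd_cont {k : ℕ} (Q : Matrix (Fin k) (Fin k) ℝ) : Continuous (gaussianDensity Q) := by
  unfold gaussianDensity
  fun_prop

lemma gd_nonneg {k : ℕ} {Q : Matrix (Fin k) (Fin k) ℝ} (hQ : 0 ≤ Q.det) (u) :
    0 ≤ gaussianDensity Q u := by
  unfold gaussianDensity
  positivity

open scoped MatrixOrder in
lemma gd_sqrt {k : ℕ} {Q : Matrix (Fin k) (Fin k) ℝ} (hQ : Q.PosDef) :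
    ∃ B : Matrix (Fin k) (Fin k) ℝ, Q = Bᵀ * B := by
  obtain ⟨B, hB⟩ := CStarAlgebra.nonneg_iff_eq_star_mul_self.mp hQ.posSemidef.nonneg
  exact ⟨B, by simpa [Matrix.star_eq_conjTranspose] using hB⟩

lemma gd_std (k : ℕ) :
    ∫⁻ v : Fin k → ℝ, ENNReal.ofReal (Real.exp (-(1 / 2) * (v ⬝ᵥ v))) =
      ENNReal.ofReal ((2 * π) ^ ((k : ℝ) / 2)) := by
  have e : ∀ v : Fin k → ℝ, Real.exp (-(1 / 2) * (v ⬝ᵥ v))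
      = ∏ i, Real.exp (-(1 / 2) * (v i) ^ 2) := by
    intro v
    rw [← Real.exp_sum, dotProduct, Finset.mul_sum]
    simp only [pow_two]
  simp only [e]
  rw [← ofReal_integral_eq_lintegral_ofReal]
  · rw [integral_fintype_prod_volume_eq_pow (fun t : ℝ => Real.exp (-(1 / 2) * t ^ 2)),
      integral_gaussian, Fintype.card_fin, Real.sqrt_eq_rpow, ← Real.rpow_natCast,
      ← Real.rpow_mul (by positivity)]
    congr 2 <;> ring
  · exact Integrable.fintype_prod (f := fun _ (t : ℝ) => Real.exp (-(1 / 2) * t ^ 2))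
      (fun i => integrable_exp_neg_mul_sq (by norm_num))
  · exact Filter.Eventually.of_forall fun v => Finset.prod_nonneg fun i _ => (Real.exp_pos _).le

lemma gd_norm {k : ℕ} {Q : Matrix (Fin k) (Fin k) ℝ} (hQ : Q.PosDef) :
    ∫⁻ w, ENNReal.ofReal (gaussianDensity Q w) = 1 := by
  obtain ⟨B, hB⟩ := gd_sqrt hQ.inv
  have hdd : Q.det⁻¹ = B.det ^ 2 := by
    have := congrArg Matrix.det hB
    rw [Matrix.det_mul, Matrix.det_transpose, Matrix.det_nonsing_inv, Ring.inverse_eq_inv'] at this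
    rw [this]; ring
  have hB0 : B.det ≠ 0 := by
    intro h
    have := inv_pos.2 hQ.det_pos
    rw [hdd, h] at this
    norm_num at this
  have hq : ∀ w : Fin k → ℝ, w ⬝ᵥ Q⁻¹ *ᵥ w = (Matrix.toLin' B w) ⬝ᵥ (Matrix.toLin' B w) := by
    intro w
    rw [hB, ← Matrix.mulVec_mulVec, Matrix.dotProduct_mulVec, Matrix.vecMul_transpose,
      Matrix.toLin'_apply]
  have hdet : Q.det ^ (-(1 : ℝ) / 2) = |B.det| := by
    rw [neg_div, Real.rpow_neg hQ.det_pos.le, ← Real.inv_rpow hQ.det_pos.le, hdd,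
      ← Real.sqrt_eq_rpow, Real.sqrt_sq_eq_abs]
  have hg : ∀ w, ENNReal.ofReal (gaussianDensity Q w) =
      ENNReal.ofReal ((2 * π) ^ (-(k : ℝ) / 2) * |B.det|) *
      (fun v : Fin k → ℝ => ENNReal.ofReal (Real.exp (-(1 / 2) * (v ⬝ᵥ v)))) (Matrix.toLin' B w) := by
    intro w
    rw [gaussianDensity, hq, hdet, ENNReal.ofReal_mul (by positivity)]
  have hcm : Measurable (fun v : Fin k → ℝ => ENNReal.ofReal (Real.exp (-(1 / 2) * (v ⬝ᵥ v)))) := by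
    have : Continuous (fun v : Fin k → ℝ => Real.exp (-(1 / 2) * (v ⬝ᵥ v))) := by fun_prop
    exact this.measurable.ennreal_ofReal
  have hBm : Measurable (Matrix.toLin' B) :=
    (LinearMap.continuous_of_finiteDimensional (Matrix.toLin' B)).measurable
  have hcB : Measurable fun w => (fun v : Fin k → ℝ =>
      ENNReal.ofReal (Real.exp (-(1 / 2) * (v ⬝ᵥ v)))) (Matrix.toLin' B w) := hcm.comp hBm
  rw [lintegral_congr hg, lintegral_const_mul _ hcB, ← lintegral_map hcm hBm,
    Real.map_matrix_volume_pi_eq_smul_volume_pi hB0, lintegral_smul_measure, gd_std,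
    smul_eq_mul, ← ENNReal.ofReal_mul (by positivity), ← ENNReal.ofReal_mul (by positivity),
    ← ENNReal.ofReal_one]
  congr 1
  rw [abs_inv, neg_div, Real.rpow_neg (by positivity)]
  have h1 : |B.det| ≠ 0 := abs_ne_zero.2 hB0
  have h2 : (2 * π) ^ ((k : ℝ) / 2) ≠ 0 := by positivity
  field_simp

/-- **Exactness of the stochastic ensemble Kalman filter analysis step.** If the forecast
member `X` has Gaussian density `φ_Σ(· - m₀)`, the perturbation `η` has density `φ_R`, and
`X` and `η` are independent, then the analysis member `Xᵃ = X + K(y - HX - η)`, with Kalman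
gain `K = ΣHᵀ(HΣHᵀ + R)⁻¹`, has exactly the Gaussian posterior density `φ_C(· - μ)` with
`μ = m₀ + K(y - Hm₀)` and `C = (I - KH)Σ`. -/
theorem enkf_analysis_exactness
    (n m : ℕ)
    (Sig : Matrix (Fin n) (Fin n) ℝ) (R : Matrix (Fin m) (Fin m) ℝ)
    (H : Matrix (Fin m) (Fin n) ℝ)
    (hSig : Sig.PosDef) (hR : R.PosDef)
    (y : Fin m → ℝ) (m₀ : Fin n → ℝ)
    (S : Matrix (Fin m) (Fin m) ℝ) (hS : S = H * Sig * Hᵀ + R)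
    (K : Matrix (Fin n) (Fin m) ℝ) (hK : K = Sig * Hᵀ * S⁻¹)
    (C : Matrix (Fin n) (Fin n) ℝ) (hC : C = (1 - K * H) * Sig)
    (Ω : Type*) [MeasurableSpace Ω] (P : Measure Ω) [IsProbabilityMeasure P]
    (X : Ω → (Fin n → ℝ)) (η : Ω → (Fin m → ℝ))
    (hX : Measurable X) (hη : Measurable η)
    (hindep : IndepFun X η P)
    (hlawX : P.map X = volume.withDensity (fun x => ENNReal.ofReal (gaussianDensity Sig (x - m₀))))
    (hlawη : P.map η = volume.withDensity (fun u => ENNReal.ofReal (gaussianDensity R u))) :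
    P.map (fun ω => X ω + K *ᵥ (y - H *ᵥ X ω - η ω)) =
      volume.withDensity
        (fun x => ENNReal.ofReal (gaussianDensity C (x - (m₀ + K *ᵥ (y - H *ᵥ m₀))))) := by
  have hSp : S.PosDef := by
    have h0 : (H * Sig * Hᵀ).PosSemidef := by
      simpa using hSig.posSemidef.mul_mul_conjTranspose_same H
    rw [hS]
    exact Matrix.PosDef.posSemidef_add h0 hR
  have key := gd_quad Sig R H hSig hR S hS K hK C hC hSp
  have mf : Measurable fun x => ENNReal.ofReal (gaussianDensity Sig (x - m₀)) :=
    ((gd_cont Sig).comp (continuous_id.sub continuous_const)).measurable.ennreal_ofReal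
  have mg : Measurable fun u => ENNReal.ofReal (gaussianDensity R u) :=
    (gd_cont R).measurable.ennreal_ofReal
  have mc : Measurable fun x => ENNReal.ofReal
      (gaussianDensity C (x - (m₀ + K *ᵥ (y - H *ᵥ m₀)))) :=
    ((gd_cont C).comp (continuous_id.sub continuous_const)).measurable.ennreal_ofReal
  have mH : Measurable fun x : Fin n → ℝ => H *ᵥ x :=
    (Continuous.matrix_mulVec continuous_const continuous_id).measurable
  have mK : Measurable fun w : Fin m → ℝ => K *ᵥ w :=
    (Continuous.matrix_mulVec continuous_const continuous_id).measurable
  have hjoint := (indepFun_iff_map_prod_eq_prod_map_map hX.aemeasurable hη.aemeasurable).1 hindep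
  rw [hlawX, hlawη, prod_withDensity mf mg] at hjoint
  have mT : Measurable fun z : (Fin n → ℝ) × (Fin m → ℝ) =>
      z.1 + K *ᵥ (y - H *ᵥ z.1 - z.2) :=
    measurable_fst.add (mK.comp ((measurable_const.sub (mH.comp measurable_fst)).sub
      measurable_snd))
  have hmap : P.map (fun ω => X ω + K *ᵥ (y - H *ᵥ X ω - η ω)) =
      (P.map (fun ω => (X ω, η ω))).map (fun z => z.1 + K *ᵥ (y - H *ᵥ z.1 - z.2)) := by
    rw [Measure.map_map mT (hX.prodMk hη)]; rfl
  rw [hmap, hjoint]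
  obtain ⟨f, hf⟩ : ∃ f : (Fin n → ℝ) → ENNReal,
    f = fun x => ENNReal.ofReal (gaussianDensity Sig (x - m₀)) := ⟨_, rfl⟩
  obtain ⟨g, hg⟩ : ∃ g : (Fin m → ℝ) → ENNReal,
    g = fun x => ENNReal.ofReal (gaussianDensity R x) := ⟨_, rfl⟩
  have ef (x) : ENNReal.ofReal (gaussianDensity Sig (x - m₀)) = f x := by rw [hf]
  have eg (x) : ENNReal.ofReal (gaussianDensity R x) = g x := by rw [hg]
  simp only [ef, eg] at mf mg ⊢
  refine Measure.ext_of_lintegral _ fun F hF => ?_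
  have mfg : Measurable fun z : (Fin n → ℝ) × (Fin m → ℝ) => f z.1 * g z.2 :=
    (mf.comp measurable_fst).mul (mg.comp measurable_snd)
  have hFT : Measurable fun z : (Fin n → ℝ) × (Fin m → ℝ) =>
      F (z.1 + K *ᵥ (y - H *ᵥ z.1 - z.2)) := hF.comp mT
  rw [lintegral_map hF mT, lintegral_withDensity_eq_lintegral_mul _ mfg hFT,
    lintegral_withDensity_eq_lintegral_mul _ mc hF,
    lintegral_prod _ (mfg.mul hFT).aemeasurable]
  simp only [Pi.mul_apply]
  have m1 : Measurable fun z : (Fin n → ℝ) × (Fin m → ℝ) =>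
      f z.1 * g (z.2 - H *ᵥ z.1) * F (z.1 + K *ᵥ (y - z.2)) :=
    ((mf.comp measurable_fst).mul (mg.comp (measurable_snd.sub (mH.comp measurable_fst)))).mul
      (hF.comp (measurable_fst.add (mK.comp (measurable_const.sub measurable_snd))))
  have mx : Measurable fun z : (Fin n → ℝ) × (Fin m → ℝ) => z.1 - K *ᵥ (y - z.2) :=
    measurable_fst.sub (mK.comp (measurable_const.sub measurable_snd))
  have m2 : Measurable fun z : (Fin n → ℝ) × (Fin m → ℝ) =>
      f (z.1 - K *ᵥ (y - z.2)) * g (z.2 - H *ᵥ (z.1 - K *ᵥ (y - z.2))) * F z.1 :=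
    ((mf.comp mx).mul (mg.comp (measurable_snd.sub (mH.comp mx)))).mul (hF.comp measurable_fst)
  calc ∫⁻ x, ∫⁻ u, f x * g u * F (x + K *ᵥ (y - H *ᵥ x - u))
      = ∫⁻ x, ∫⁻ w, f x * g (w - H *ᵥ x) * F (x + K *ᵥ (y - w)) := by
        refine lintegral_congr fun x => ?_
        rw [← lintegral_sub_right_eq_self (μ := volume) _ (H *ᵥ x)]
        refine lintegral_congr fun w => ?_
        congr 4
        abel
    _ = ∫⁻ w, ∫⁻ x, f x * g (w - H *ᵥ x) * F (x + K *ᵥ (y - w)) :=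
        lintegral_lintegral_swap m1.aemeasurable
    _ = ∫⁻ w, ∫⁻ x, f (x - K *ᵥ (y - w)) * g (w - H *ᵥ (x - K *ᵥ (y - w))) * F x := by
        refine lintegral_congr fun w => ?_
        rw [← lintegral_sub_right_eq_self (μ := volume) _ (K *ᵥ (y - w))]
        simp only [sub_add_cancel]
    _ = ∫⁻ x, ∫⁻ w, f (x - K *ᵥ (y - w)) * g (w - H *ᵥ (x - K *ᵥ (y - w))) * F x :=
        (lintegral_lintegral_swap m2.aemeasurable).symm
    _ = ∫⁻ x, ∫⁻ w, ENNReal.ofReal (gaussianDensity C (x - (m₀ + K *ᵥ (y - H *ᵥ m₀)))) * F x *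
          ENNReal.ofReal (gaussianDensity S (w - H *ᵥ m₀)) := by
        refine lintegral_congr fun x => lintegral_congr fun w => ?_
        have hk := key (x - (m₀ + K *ᵥ (y - H *ᵥ m₀))) (w - H *ᵥ m₀)
        have hx1 : x - (m₀ + K *ᵥ (y - H *ᵥ m₀)) + K *ᵥ (w - H *ᵥ m₀)
            = x - K *ᵥ (y - w) - m₀ := by
          simp only [Matrix.mulVec_sub]; abel
        have hx2 : w - H *ᵥ m₀ - H *ᵥ (x - K *ᵥ (y - w) - m₀)
            = w - H *ᵥ (x - K *ᵥ (y - w)) := by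
          simp only [Matrix.mulVec_sub]; abel
        rw [hx1, hx2] at hk
        have hk2 := congrArg ENNReal.ofReal hk
        rw [ENNReal.ofReal_mul (gd_nonneg hSig.det_pos.le _),
          ENNReal.ofReal_mul' (gd_nonneg hSp.det_pos.le _), ef, eg] at hk2
        rw [hk2]; ring
    _ = ∫⁻ x, ENNReal.ofReal (gaussianDensity C (x - (m₀ + K *ᵥ (y - H *ᵥ m₀)))) * F x := by
        refine lintegral_congr fun x => ?_
        rw [lintegral_const_mul, lintegral_sub_right_eq_self
          (fun w => ENNReal.ofReal (gaussianDensity S w)), gd_norm hSp, mul_one]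
        exact ((gd_cont S).comp (continuous_id.sub continuous_const)).measurable.ennreal_ofReal
end

section
/- Let (Ω, 𝓕, P) be a probability space and let X : Ω → S, Z : Ω → T, W : Ω → U be random variables into standard Borel spaces S, T, U. If X is conditionally independent of W given Z, then for P∘W⁻¹-almost every w ∈ U, the regular conditional distribution of X given W satisfies condDistrib(X | W)(w) = ∫_T condDistrib(X | Z)(z) d[condDistrib(Z | W)(w)](z), i.e., the conditional law of X given W = w is the composition (bind) of the conditional law of Z given W = w with the Markov kernel z ↦ conditional law of X given Z = z. -/
open MeasureTheory ProbabilityTheory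

/-- **Chapman–Kolmogorov / prediction decomposition.** If `X` is conditionally independent of
`W` given `Z`, then for `P ∘ W⁻¹`-almost every `w` the conditional law of `X` given `W = w` is
the composition (bind) of the conditional law of `Z` given `W = w` with the Markov kernel
`z ↦` conditional law of `X` given `Z = z`:
`condDistrib X W P w = ∫ condDistrib X Z P z d(condDistrib Z W P w)(z)`. -/
theorem condDistrib_bind_of_condIndepFun
    {Ω S T U : Type*}
    [MeasurableSpace Ω] [StandardBorelSpace Ω] [Nonempty Ω]
    [MeasurableSpace S] [StandardBorelSpace S] [Nonempty S]
    [MeasurableSpace T] [StandardBorelSpace T] [Nonempty T]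
    [MeasurableSpace U] [StandardBorelSpace U] [Nonempty U]
    (P : Measure Ω) [IsProbabilityMeasure P]
    (X : Ω → S) (Z : Ω → T) (W : Ω → U)
    (hX : Measurable X) (hZ : Measurable Z) (hW : Measurable W)
    (hCI : CondIndepFun (MeasurableSpace.comap Z inferInstance) hZ.comap_le X W P) :
    ∀ᵐ w ∂(P.map W),
      condDistrib X W P w = (condDistrib Z W P w).bind (fun z => condDistrib X Z P z) := by
  have h := (condIndepFun_iff_condDistrib_prod_ae_eq_prodMkRight hX hW hZ).1 hCI.symm
  rw [condDistrib_ae_eq_iff_measure_eq_compProd _ hX.aemeasurable] at h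
  have key : P.map (fun ω => (W ω, X ω))
      = P.map W ⊗ₘ (condDistrib X Z P ∘ₖ condDistrib Z W P) := by
    refine Measure.ext_prod_iff.2 fun {A B} hA hB => ?_
    have hm : Measurable fun z => condDistrib X Z P z B := Kernel.measurable_coe _ hB
    have h1 : P.map (fun ω => (W ω, X ω)) (A ×ˢ B)
        = P.map (fun ω => ((Z ω, W ω), X ω)) ((Set.univ ×ˢ A) ×ˢ B) := by
      rw [Measure.map_apply (by fun_prop) (hA.prod hB),
        Measure.map_apply (by fun_prop) ((MeasurableSet.univ.prod hA).prod hB)]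
      congr 1
      ext ω
      simp
    rw [h1, h, Measure.compProd_apply_prod (MeasurableSet.univ.prod hA) hB,
      Measure.compProd_apply_prod hA hB]
    simp only [Kernel.prodMkRight_apply, Kernel.comp_apply' _ _ _ hB]
    have h2 := Measure.setLIntegral_compProd (μ := P.map W) (κ := condDistrib Z W P)
      (f := fun p : U × T => condDistrib X Z P p.2 B) (hm.comp measurable_snd) hA
      MeasurableSet.univ
    simp only [Measure.restrict_univ] at h2
    rw [← h2, compProd_map_condDistrib hZ.aemeasurable,
      setLIntegral_map (f := fun p : U × T => condDistrib X Z P p.2 B)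
        (hA.prod MeasurableSet.univ) (hm.comp measurable_snd) (hW.prodMk hZ),
      setLIntegral_map (f := fun p : T × U => condDistrib X Z P p.1 B)
        (MeasurableSet.univ.prod hA) (hm.comp measurable_fst) (hZ.prodMk hW)]
    congr 2
    ext ω
    simp
  filter_upwards [condDistrib_ae_eq_of_measure_eq_compProd W hX.aemeasurable key] with w hw
  rw [hw, Kernel.comp_apply]
end

section
/- Let (Ω, 𝓕, P) be a probability space, X : Ω → S and Y : Ω → T random variables with S, T standard Borel spaces, let ν be a σ-finite measure on T, and let g : S × T → [0, ∞) be jointly measurable such that for P∘X⁻¹-almost every x, the regular conditional distribution of Y given X = x equals ν.withDensity(g(x, ·)) (so g is the conditional density of Y given X with respect to ν). Then the law of Y is absolutely continuous with respect to ν with density y ↦ ∫_S g(x, y) d(P∘X⁻¹)(x), and for P∘Y⁻¹-almost every y ∈ T with 0 < ∫_S g(x, y) d(P∘X⁻¹)(x) < ∞, the regular conditional distribution of X given Y = y equals (P∘X⁻¹).withDensity( x ↦ g(x, y) / ∫_S g(x', y) d(P∘X⁻¹)(x') ). -/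
open MeasureTheory ProbabilityTheory
open scoped ENNReal

/-- **Bayes' theorem for dominated likelihoods.** If the conditional law of `Y` given `X = x`
has density `g (x, ·)` with respect to a σ-finite measure `ν`, then the law of `Y` has density
`y ↦ ∫ g (x, y) d(P∘X⁻¹)(x)` with respect to `ν`, and for almost every `y` with
`0 < ∫ g (x, y) d(P∘X⁻¹)(x) < ∞` the conditional law of `X` given `Y = y` has density
`x ↦ g (x, y) / ∫ g (x', y) d(P∘X⁻¹)(x')` with respect to the law of `X`. -/
theorem bayes_theorem_dominated
    {Ω S T : Type*}
    [MeasurableSpace Ω]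
    [MeasurableSpace S] [StandardBorelSpace S] [Nonempty S]
    [MeasurableSpace T] [StandardBorelSpace T] [Nonempty T]
    (P : Measure Ω) [IsProbabilityMeasure P]
    (X : Ω → S) (Y : Ω → T)
    (hX : Measurable X) (hY : Measurable Y)
    (ν : Measure T) [SigmaFinite ν]
    (g : S × T → ℝ≥0∞) (hg : Measurable g)
    (hlik : ∀ᵐ x ∂(P.map X), condDistrib Y X P x = ν.withDensity (fun y => g (x, y))) :
    P.map Y = ν.withDensity (fun y => ∫⁻ x, g (x, y) ∂(P.map X)) ∧
    ∀ᵐ y ∂(P.map Y),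
      (0 < ∫⁻ x, g (x, y) ∂(P.map X) ∧ ∫⁻ x, g (x, y) ∂(P.map X) ≠ ⊤) →
        condDistrib X Y P y =
          (P.map X).withDensity (fun x => g (x, y) / ∫⁻ x', g (x', y) ∂(P.map X)) := by
  have : IsProbabilityMeasure (P.map X) := Measure.isProbabilityMeasure_map hX.aemeasurable
  have : IsProbabilityMeasure (P.map Y) := Measure.isProbabilityMeasure_map hY.aemeasurable
  set μ := P.map X with hμ
  set h : T → ℝ≥0∞ := fun y => ∫⁻ x, g (x, y) ∂μ with hh
  have hhm : Measurable h := hg.lintegral_prod_left'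
  have key : ∀ A : Set S, MeasurableSet A → ∀ B : Set T, MeasurableSet B →
      P (X ⁻¹' A ∩ Y ⁻¹' B) = ∫⁻ y in B, ∫⁻ x in A, g (x, y) ∂μ ∂ν := by
    intro A hA B hB
    have h1 : (P.map fun ω => (X ω, Y ω)) (A ×ˢ B) = P (X ⁻¹' A ∩ Y ⁻¹' B) := by
      rw [Measure.map_apply (hX.prodMk hY) (hA.prod hB)]
      rfl
    rw [← h1, ← compProd_map_condDistrib hY.aemeasurable, Measure.compProd_apply_prod hA hB,
      ← hμ, ← lintegral_lintegral_swap (by exact hg.aemeasurable)]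
    refine setLIntegral_congr_fun_ae hA ?_
    filter_upwards [hlik] with x hx _
    rw [hx, withDensity_apply _ hB]
  have part1 : P.map Y = ν.withDensity h := by
    ext B hB
    rw [Measure.map_apply hY hB, withDensity_apply _ hB]
    have := key Set.univ MeasurableSet.univ B hB
    simpa using this
  refine ⟨part1, ?_⟩
  have hfin : ∀ᵐ y ∂ν, h y < ⊤ := by
    refine ae_lt_top hhm ?_
    have h2 : ν.withDensity h Set.univ = 1 := by rw [← part1]; exact measure_univ
    rw [withDensity_apply _ MeasurableSet.univ, Measure.restrict_univ] at h2
    rw [h2]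
    exact ENNReal.one_ne_top
  have hfm : Measurable (Function.uncurry fun (y : T) (x : S) => g (x, y) / h y) :=
    (hg.comp measurable_swap).div (hhm.comp measurable_fst)
  let κ : Kernel T S := Kernel.withDensity (Kernel.const T μ) (fun y x => g (x, y) / h y)
  have hκ : ∀ y, κ y = μ.withDensity (fun x => g (x, y) / h y) := fun y => by
    simp only [κ, Kernel.withDensity_apply _ hfm, Kernel.const_apply]
  have hgy : ∀ y, Measurable fun x => g (x, y) := fun y => hg.comp (by fun_prop)
  have hκA : ∀ y (A : Set S), MeasurableSet A →
      κ y A = (∫⁻ x in A, g (x, y) ∂μ) / h y := fun y A hA => by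
    rw [hκ, withDensity_apply _ hA]
    simp only [div_eq_mul_inv]
    rw [lintegral_mul_const _ (hgy y)]
  have : IsFiniteKernel κ := ⟨1, ENNReal.one_lt_top, fun y => by
    rw [hκA y _ MeasurableSet.univ, Measure.restrict_univ]
    exact ENNReal.div_self_le_one⟩
  have hjoint : P.map (fun ω => (Y ω, X ω)) = P.map Y ⊗ₘ κ := by
    have : IsProbabilityMeasure (P.map fun ω => (Y ω, X ω)) :=
      Measure.isProbabilityMeasure_map (hY.prodMk hX).aemeasurable
    refine Measure.ext_prod fun {B A} hB hA => ?_
    rw [Measure.map_apply (hY.prodMk hX) (hB.prod hA), Measure.compProd_apply_prod hB hA, part1,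
      setLIntegral_withDensity_eq_setLIntegral_mul _ hhm (κ.measurable_coe hA) hB]
    have : (fun ω => (Y ω, X ω)) ⁻¹' B ×ˢ A = X ⁻¹' A ∩ Y ⁻¹' B := by
      ext ω; simp [and_comm]
    rw [this, key A hA B hB]
    refine setLIntegral_congr_fun_ae hB ?_
    filter_upwards [hfin] with y hy _
    rw [Pi.mul_apply, hκA y A hA]
    by_cases h0 : h y = 0
    · have : ∫⁻ x in A, g (x, y) ∂μ ≤ h y := setLIntegral_le_lintegral _ _
      rw [h0] at this ⊢
      simpa using this
    · rw [ENNReal.mul_div_cancel h0 hy.ne]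
  filter_upwards [condDistrib_ae_eq_of_measure_eq_compProd_of_measurable hY hX hjoint] with y hy _
  rw [hy, hκ]
end

section
/- Let (Ω, 𝓕, P) be a probability space and X : Ω → S, Y : Ω → T, W : Ω → U random variables into standard Borel spaces. Let ν be a σ-finite measure on T and g : S × T → [0, ∞) jointly measurable, and assume that for P∘(X, W)⁻¹-almost every (x, w), the regular conditional distribution of Y given (X, W) = (x, w) equals ν.withDensity(g(x, ·)) (in particular it does not depend on w, so Y is conditionally independent of W given X with conditional density g). Then for P∘(Y, W)⁻¹-almost every (y, w) with 0 < ∫_S g(x, y) d[condDistrib(X | W)(w)](x) < ∞, the regular conditional distribution of X given (Y, W) = (y, w) equals [condDistrib(X | W)(w)].withDensity( x ↦ g(x, y) / ∫_S g(x', y) d[condDistrib(X | W)(w)](x') ). -/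
open MeasureTheory ProbabilityTheory
open scoped ENNReal

/-- **Conditional Bayes rule (filtering analysis step).** If the conditional law of `Y` given
`(X, W) = (x, w)` has density `g (x, ·)` with respect to a σ-finite measure `ν`, not depending
on `w`, then for almost every `(y, w)` with
`0 < ∫ g (x, y) d[condDistrib X W P (w)](x) < ∞`, the conditional law of `X` given
`(Y, W) = (y, w)` has density `x ↦ g (x, y) / ∫ g (x', y) d[condDistrib X W P (w)](x')` with
respect to the conditional law of `X` given `W = w`. -/
theorem conditional_bayes_rule
    {Ω S T U : Type*}
    [MeasurableSpace Ω]
    [MeasurableSpace S] [StandardBorelSpace S] [Nonempty S]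
    [MeasurableSpace T] [StandardBorelSpace T] [Nonempty T]
    [MeasurableSpace U] [StandardBorelSpace U] [Nonempty U]
    (P : Measure Ω) [IsProbabilityMeasure P]
    (X : Ω → S) (Y : Ω → T) (W : Ω → U)
    (hX : Measurable X) (hY : Measurable Y) (hW : Measurable W)
    (ν : Measure T) [SigmaFinite ν]
    (g : S × T → ℝ≥0∞) (hg : Measurable g)
    (hlik : ∀ᵐ p ∂(P.map (fun ω => (X ω, W ω))),
      condDistrib Y (fun ω => (X ω, W ω)) P p = ν.withDensity (fun y => g (p.1, y))) :
    ∀ᵐ q ∂(P.map (fun ω => (Y ω, W ω))),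
      (0 < ∫⁻ x, g (x, q.1) ∂(condDistrib X W P q.2) ∧
        ∫⁻ x, g (x, q.1) ∂(condDistrib X W P q.2) ≠ ⊤) →
        condDistrib X (fun ω => (Y ω, W ω)) P q =
          (condDistrib X W P q.2).withDensity
            (fun x => g (x, q.1) / ∫⁻ x', g (x', q.1) ∂(condDistrib X W P q.2)) := by
  set κ := condDistrib X W P with hκ
  set Z : T × U → ℝ≥0∞ := fun q => ∫⁻ x, g (x, q.1) ∂(κ q.2) with hZdef
  have hZ : Measurable Z := by
    have h1 : Measurable (Function.uncurry (fun (q : T × U) (x : S) => g (x, q.1))) := by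
      unfold Function.uncurry
      fun_prop
    exact Measurable.lintegral_kernel_prod_right (κ := κ.comap Prod.snd measurable_snd) h1
  -- joint law of `(X, Y, W)`
  have key : ∀ f : (T × U) × S → ℝ≥0∞, Measurable f →
      ∫⁻ ω, f ((Y ω, W ω), X ω) ∂P
        = ∫⁻ w, ∫⁻ y, ∫⁻ x, g (x, y) * f ((y, w), x) ∂(κ w) ∂ν ∂(P.map W) := by
    intro f hf
    have e1 : P.map (fun ω => ((X ω, W ω), Y ω)) = P.map (fun ω => (X ω, W ω)) ⊗ₘ
        condDistrib Y (fun ω => (X ω, W ω)) P :=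
      (compProd_map_condDistrib hY.aemeasurable).symm
    have e2 : P.map (fun ω => (W ω, X ω)) = P.map W ⊗ₘ κ :=
      (compProd_map_condDistrib hX.aemeasurable).symm
    have hG : Measurable (fun p : S × U => ∫⁻ y, g (p.1, y) * f ((y, p.2), p.1) ∂ν) := by
      apply Measurable.lintegral_prod_right'
        (f := fun r : (S × U) × T => g (r.1.1, r.2) * f ((r.2, r.1.2), r.1.1))
      fun_prop
    have hG' : Measurable (fun p : U × S => ∫⁻ y, g (p.2, y) * f ((y, p.1), p.2) ∂ν) :=
      hG.comp measurable_swap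
    calc ∫⁻ ω, f ((Y ω, W ω), X ω) ∂P
        = ∫⁻ r, f ((r.2, r.1.2), r.1.1) ∂(P.map (fun ω => ((X ω, W ω), Y ω))) := by
          rw [lintegral_map (by fun_prop) (by fun_prop)]
      _ = ∫⁻ p, ∫⁻ y, f ((y, p.2), p.1) ∂(condDistrib Y (fun ω => (X ω, W ω)) P p)
            ∂(P.map (fun ω => (X ω, W ω))) := by
          rw [e1, Measure.lintegral_compProd (by fun_prop)]
      _ = ∫⁻ p, ∫⁻ y, g (p.1, y) * f ((y, p.2), p.1) ∂ν
            ∂(P.map (fun ω => (X ω, W ω))) := by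
          apply lintegral_congr_ae
          filter_upwards [hlik] with p hp
          rw [hp, lintegral_withDensity_eq_lintegral_mul _ (by fun_prop) (by fun_prop)]
          rfl
      _ = ∫⁻ r, ∫⁻ y, g (r.2, y) * f ((y, r.1), r.2) ∂ν ∂(P.map (fun ω => (W ω, X ω))) := by
          rw [lintegral_map hG (by fun_prop), lintegral_map hG' (by fun_prop)]
      _ = ∫⁻ w, ∫⁻ x, ∫⁻ y, g (x, y) * f ((y, w), x) ∂ν ∂(κ w) ∂(P.map W) := by
          rw [e2, Measure.lintegral_compProd hG']
      _ = _ := by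
          apply lintegral_congr
          intro w
          rw [lintegral_lintegral_swap]
          unfold Function.uncurry
          fun_prop
  -- law of `(Y, W)`
  have keyB : ∀ F : T × U → ℝ≥0∞, Measurable F →
      ∫⁻ ω, F (Y ω, W ω) ∂P = ∫⁻ w, ∫⁻ y, Z (y, w) * F (y, w) ∂ν ∂(P.map W) := by
    intro F hF
    rw [key (fun r => F r.1) (by fun_prop)]
    refine lintegral_congr fun w => lintegral_congr fun y => ?_
    exact lintegral_mul_const (F (y, w)) (by fun_prop)
  have hfin : ∀ᵐ w ∂(P.map W), ∀ᵐ y ∂ν, Z (y, w) < ⊤ := by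
    have h1 := keyB (fun _ => 1) measurable_const
    simp only [mul_one, lintegral_const, measure_univ] at h1
    have hm : Measurable (fun w => ∫⁻ y, Z (y, w) ∂ν) :=
      Measurable.lintegral_prod_left' hZ
    filter_upwards [ae_lt_top hm (by rw [← h1]; simp)] with w hw
    exact ae_lt_top (by fun_prop) hw.ne
  -- the posterior kernel
  classical
  set h : T × U → S → ℝ≥0∞ := fun q x => if 0 < Z q ∧ Z q ≠ ⊤ then g (x, q.1) / Z q else 1 with hh
  have hset : MeasurableSet {q | 0 < Z q ∧ Z q ≠ ⊤} :=
    (measurableSet_lt measurable_const hZ).inter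
      (hZ (measurableSet_singleton ⊤).compl)
  have hhm : Measurable (Function.uncurry h) := by
    refine Measurable.ite (measurable_fst hset) ?_ measurable_const
    exact Measurable.div (by fun_prop) (hZ.comp measurable_fst)
  let η : Kernel (T × U) S := (κ.comap Prod.snd measurable_snd).withDensity h
  have hη : ∀ q, η q = (κ q.2).withDensity (h q) := fun q => by
    simp only [η]
    rw [Kernel.withDensity_apply _ hhm, Kernel.comap_apply]
  have hhq : ∀ q, Measurable (h q) := fun q => hhm.comp measurable_prodMk_left
  have hmark : IsMarkovKernel η := by
    refine ⟨fun q => ⟨?_⟩⟩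
    rw [hη, withDensity_apply _ MeasurableSet.univ, Measure.restrict_univ]
    by_cases hq : 0 < Z q ∧ Z q ≠ ⊤
    · simp only [hh, if_pos hq, div_eq_mul_inv]
      rw [lintegral_mul_const _ (by fun_prop)]
      exact ENNReal.mul_inv_cancel hq.1.ne' hq.2
    · simp only [hh, if_neg hq]
      simp
  have heq : P.map (fun ω => ((Y ω, W ω), X ω)) = P.map (fun ω => (Y ω, W ω)) ⊗ₘ η := by
    refine Measure.ext_of_lintegral _ fun f hf => ?_
    have hF : Measurable (fun q => ∫⁻ x, f (q, x) ∂(η q)) :=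
      Measurable.lintegral_kernel_prod_right (κ := η) (f := fun q x => f (q, x)) hf
    rw [lintegral_map hf (by fun_prop), key f hf, Measure.lintegral_compProd hf,
      lintegral_map hF (by fun_prop), keyB _ hF]
    refine lintegral_congr_ae ?_
    filter_upwards [hfin] with w hw
    refine lintegral_congr_ae ?_
    filter_upwards [hw] with y hy
    rw [hη, lintegral_withDensity_eq_lintegral_mul _ (hhq _) (by fun_prop),
      ← lintegral_const_mul _ ((hhq _).mul (by fun_prop))]
    by_cases h0 : Z (y, w) = 0
    · have hg0 : ∀ᵐ x ∂(κ w), g (x, y) = 0 :=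
        (lintegral_eq_zero_iff (by fun_prop)).1 h0
      refine lintegral_congr_ae ?_
      filter_upwards [hg0] with x hx
      simp [hx, h0]
    · refine lintegral_congr fun x => ?_
      have hq : 0 < Z (y, w) ∧ Z (y, w) ≠ ⊤ := ⟨pos_iff_ne_zero.2 h0, hy.ne⟩
      simp only [hh, Pi.mul_apply, if_pos hq]
      rw [← mul_assoc, ENNReal.mul_div_cancel h0 hy.ne]
  have hfinal := condDistrib_ae_eq_of_measure_eq_compProd (μ := P) (κ := η)
    (fun ω => (Y ω, W ω)) hX.aemeasurable heq
  filter_upwards [hfinal] with q hq hpos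
  rw [hq, hη]
  congr 1
  funext x
  exact if_pos hpos
end
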